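/- arXiv:2311.03256 — 2 statements merged into one kernel-verified Lean document; each statement's English description precedes it below -/
import Mathlib

section
/- Let N be a natural number and p a real with 0 < p < 1. Then for all natural numbers n, x with 1 ≤ n ≤ N and 1 ≤ x ≤ N, the Krawtchouk polynomials satisfy the shifted difference relation ((N+1−n)/(1−p)) · k_n(x;p,N) = (x+1) · k_{n−1}(x+1;p,N) − (N+1−x) · k_{n−1}(x−1;p,N) + (N−2x) · k_{n−1}(x;p,N), where N+1−n, N+1−x and N−2x denote real numbers. -/
/-!
Write `k_n(x) = w_x F_n(x)` with weight `w_x = (p/(1-p))^x C(N,x)`. The ratios of consecutive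
weights are rational, so dividing by `w_x` turns the claim into
`p (N+1-n) F_n(x) = p² (N-x) F_{n-1}(x+1) - (1-p)² x F_{n-1}(x-1) + p(1-p)(N-2x) F_{n-1}(x)`.
Expand `F_n(x) = ∑ c_n(m) x^{\underline m}` in falling factorials. The operator on the right is
tridiagonal in this basis (`krawAux_operator`):
`x^{\underline m} ↦ -x^{\underline{m+1}} + p(N-2m) x^{\underline m} + p² m(N-m+1) x^{\underline{m-1}}`.
Comparing coefficients leaves an identity between the `c_n(m)` that follows from Pascal's rule
(`krawCoeff_pascal`) and the ratio of consecutive coefficients (`krawCoeff_succ`). The comparison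
is carried out as a telescoping sum (`krawAux_telescope`), whose boundary term vanishes because
`c_{n-1}(N) = 0` for `n ≤ N`.
-/

/-- The (renormalized) Krawtchouk polynomial `k_n(x; p, N)`.
For `x ≥ 0` it equals `(p/(1-p))^x * C(N,x) * ₂F₁(-n,-x;-N;1/p)` written as a finite sum,
and it is `0` for `x < 0`. -/
noncomputable def kraw (p : ℝ) (N n : ℕ) (x : ℤ) : ℝ :=
  if x < 0 then 0
  else (p / (1 - p)) ^ x * (N.choose x.toNat : ℝ) *
    ∑ m ∈ Finset.range (min n x.toNat + 1),
      (-1 : ℝ) ^ m * (n.choose m : ℝ) * (x.toNat.choose m : ℝ) * (m.factorial : ℝ) *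
        ((N - m).factorial / (N.factorial : ℝ)) * p ^ (-(m : ℤ))

/-- The coefficient of the falling factorial `x (x-1) ⋯ (x-m+1)` in `₂F₁(-n,-x;-N;1/p)`. -/
noncomputable def krawCoeff (p : ℝ) (N n m : ℕ) : ℝ :=
  (-1 : ℝ) ^ m * (n.choose m : ℝ) * ((N - m).factorial / (N.factorial : ℝ)) * p ^ (-(m : ℤ))

/-- The hypergeometric factor `₂F₁(-n,-x;-N;1/p)` of `kraw`, summed over all `m ≤ N`; the terms
beyond `min n x` vanish. -/
noncomputable def krawSum (p : ℝ) (N n x : ℕ) : ℝ :=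
  ∑ m ∈ Finset.range (N + 1), krawCoeff p N n m * (x.descFactorial m : ℝ)

/-- The weight `(p/(1-p))^x C(N,x)`. -/
noncomputable def krawWeight (p : ℝ) (N x : ℕ) : ℝ :=
  (p / (1 - p)) ^ x * (N.choose x : ℝ)

lemma kraw_natCast (p : ℝ) (N n x : ℕ) (hn : n ≤ N) :
    kraw p N n (x : ℤ) = krawWeight p N x * krawSum p N n x := by
  have h0 : ¬ ((x : ℤ) < 0) := by omega
  unfold kraw krawWeight krawSum
  rw [if_neg h0, Int.toNat_natCast, zpow_natCast]
  congr 1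
  rw [← Finset.sum_subset (s₁ := Finset.range (min n x + 1)) (s₂ := Finset.range (N + 1))
    (f := fun m => krawCoeff p N n m * (x.descFactorial m : ℝ))]
  · refine Finset.sum_congr rfl fun m _ => ?_
    rw [krawCoeff, Nat.descFactorial_eq_factorial_mul_choose]
    push_cast
    ring
  · intro m hm
    simp only [Finset.mem_range] at hm ⊢
    omega
  · intro m _ hm
    simp only [Finset.mem_range, not_lt] at hm
    rcases le_or_gt m n with h | h
    · rw [Nat.descFactorial_eq_zero_iff_lt.2 (by omega)]
      simp
    · rw [krawCoeff, Nat.choose_eq_zero_of_lt h]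
      simp

lemma krawWeight_succ (p : ℝ) (hp' : p < 1) (N x : ℕ) :
    (1 - p) * ((x : ℝ) + 1) * krawWeight p N (x + 1) = p * ((N : ℝ) - x) * krawWeight p N x := by
  have hq : (1 - p) ≠ 0 := by linarith
  have hc : (N.choose (x + 1) : ℝ) * ((x : ℝ) + 1) = N.choose x * ((N : ℝ) - x) := by
    rcases le_or_gt x N with h | h
    · have := Nat.choose_succ_right_eq N x
      rw [← Nat.cast_sub h]
      exact_mod_cast this
    · simp [Nat.choose_eq_zero_of_lt h, Nat.choose_eq_zero_of_lt (Nat.lt_succ_of_lt h)]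
  have hr : (1 - p) * (p / (1 - p)) = p := by field_simp
  unfold krawWeight
  rw [pow_succ]
  linear_combination (p / (1 - p)) ^ x * p * hc +
    (p / (1 - p)) ^ x * (N.choose (x + 1) : ℝ) * ((x : ℝ) + 1) * hr

lemma cast_descFactorial_succ (x m : ℕ) :
    (x.descFactorial (m + 1) : ℝ) = ((x : ℝ) - m) * x.descFactorial m := by
  rcases le_or_gt m x with h | h
  · rw [Nat.descFactorial_succ]
    push_cast [Nat.cast_sub h]
    ring
  · simp [Nat.descFactorial_eq_zero_iff_lt.2 h]

/-- Raising `m` by one in the factor `(N-m)! p^{-m}` divides it by `p (N-m)`. -/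
lemma krawCoeff_factor (p : ℝ) (hp : 0 < p) (N m : ℕ) (hm : m < N) :
    p * ((N : ℝ) - m) * (((N - (m + 1)).factorial : ℝ) / N.factorial * p ^ (-((m + 1 : ℕ) : ℤ))) =
      ((N - m).factorial : ℝ) / N.factorial * p ^ (-(m : ℤ)) := by
  have h1 : N - m = (N - (m + 1)) + 1 := by omega
  have h2 : ((N - m).factorial : ℝ) = ((N : ℝ) - m) * (N - (m + 1)).factorial := by
    rw [← Nat.cast_sub hm.le]
    rw [h1, Nat.factorial_succ]
    push_cast
    ring
  have h3 : p * p ^ (-((m + 1 : ℕ) : ℤ)) = p ^ (-(m : ℤ)) := by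
    rw [← zpow_one_add₀ hp.ne']
    congr 1
    push_cast
    ring
  rw [h2, ← h3]
  ring

/-- Pascal's rule `C(k+1,m+1) - C(k,m+1) = C(k,m)` in terms of the coefficients. -/
lemma krawCoeff_pascal (p : ℝ) (hp : 0 < p) (N k m : ℕ) (hm : m < N) :
    p * ((N : ℝ) - m) * (krawCoeff p N (k + 1) (m + 1) - krawCoeff p N k (m + 1)) =
      -krawCoeff p N k m := by
  have h := krawCoeff_factor p hp N m hm
  unfold krawCoeff
  rw [Nat.choose_succ_succ', pow_succ]
  push_cast at h ⊢
  linear_combination (-(-1 : ℝ) ^ m * k.choose m) * h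

lemma krawCoeff_succ (p : ℝ) (hp : 0 < p) (N k m : ℕ) (hk : k < N) (hm : m ≤ N) :
    p * ((N : ℝ) - m) * (m + 1) * krawCoeff p N k (m + 1) = -((k : ℝ) - m) * krawCoeff p N k m := by
  rcases hm.lt_or_eq with hm | rfl
  · have h := krawCoeff_factor p hp N m hm
    have hc : (k.choose (m + 1) : ℝ) * ((m : ℝ) + 1) = k.choose m * ((k : ℝ) - m) := by
      rcases le_or_gt m k with h | h
      · have := Nat.choose_succ_right_eq k m
        rw [← Nat.cast_sub h]
        exact_mod_cast this
      · simp [Nat.choose_eq_zero_of_lt h, Nat.choose_eq_zero_of_lt (Nat.lt_succ_of_lt h)]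
    unfold krawCoeff
    rw [pow_succ]
    push_cast at h hc ⊢
    linear_combination (-(-1 : ℝ) ^ m * k.choose (m + 1) * (m + 1)) * h -
      (-1 : ℝ) ^ m * (((N - m).factorial : ℝ) / N.factorial * p ^ (-(m : ℤ))) * hc
  · simp [krawCoeff, Nat.choose_eq_zero_of_lt hk]

/-- The difference operator of the relation, at the point `y + 1`, is tridiagonal on falling
factorials. For `m = 0` the truncated index `m - 1` is harmless, its coefficient being `0`. -/
lemma krawAux_operator (p : ℝ) (N y m : ℕ) :
    p ^ 2 * ((N : ℝ) - (y + 1)) * ((y + 2).descFactorial m : ℝ)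
      - (1 - p) ^ 2 * ((y : ℝ) + 1) * (y.descFactorial m : ℝ)
      + p * (1 - p) * ((N : ℝ) - 2 * (y + 1)) * ((y + 1).descFactorial m : ℝ) =
    -((y + 1).descFactorial (m + 1) : ℝ) + p * ((N : ℝ) - 2 * m) * ((y + 1).descFactorial m : ℝ)
      + p ^ 2 * m * ((N : ℝ) - m + 1) * ((y + 1).descFactorial (m - 1) : ℝ) := by
  have h1 : ((y + 1).descFactorial (m + 1) : ℝ) = ((y : ℝ) + 1) * y.descFactorial m := by
    rw [Nat.succ_descFactorial_succ]
    push_cast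
    ring
  have h2 := cast_descFactorial_succ (y + 1) m
  rcases m with _ | j
  · simp
    ring
  · have h3 : ((y + 2).descFactorial (j + 1) : ℝ)
        = ((y : ℝ) + 2) * (y + 1).descFactorial j := by
      rw [Nat.succ_descFactorial_succ]
      push_cast
      ring
    have h4 := cast_descFactorial_succ (y + 1) j
    rw [h3, Nat.add_sub_cancel]
    push_cast at h1 h2 h4 ⊢
    linear_combination (1 - p) ^ 2 * h1 + (1 - (1 - p) ^ 2) * h2 -
      p ^ 2 * ((N : ℝ) - y - 1 - j - 1) * h4

/-- The partial sums of the coefficientwise difference of the two sides telescope; only the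
boundary contributions of the off-diagonal entries of the operator remain. -/
lemma krawAux_telescope (p : ℝ) (hp : 0 < p) (N k : ℕ) (hk : k < N) (f : ℕ → ℝ) (M : ℕ)
    (hM : M ≤ N) :
    ∑ m ∈ Finset.range (M + 1),
      (krawCoeff p N k m * (-f (m + 1) + p * ((N : ℝ) - 2 * m) * f m
        + p ^ 2 * m * ((N : ℝ) - m + 1) * f (m - 1))
        - p * ((N : ℝ) - k) * krawCoeff p N (k + 1) m * f m) =
      -krawCoeff p N k M * f (M + 1)
        - p ^ 2 * (M + 1) * ((N : ℝ) - M) * krawCoeff p N k (M + 1) * f M := by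
  induction M with
  | zero =>
    have h := krawCoeff_succ p hp N k 0 hk (Nat.zero_le _)
    have h0 : krawCoeff p N k 0 = krawCoeff p N (k + 1) 0 := by simp [krawCoeff]
    rw [Finset.sum_range_one, ← h0]
    push_cast at h ⊢
    linear_combination p * f 0 * h
  | succ m ih =>
    rw [Finset.sum_range_succ, ih (by omega)]
    have h1 := krawCoeff_pascal p hp N k m hM
    have h2 := krawCoeff_succ p hp N k m hk (by omega)
    have h3 := krawCoeff_succ p hp N k (m + 1) hk hM
    have hNm : p * ((N : ℝ) - m) ≠ 0 := by
      have : (m : ℝ) < N := by exact_mod_cast hM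
      exact mul_ne_zero hp.ne' (by linarith)
    have h4 : ((k : ℝ) + 1) * krawCoeff p N k (m + 1)
        = ((k : ℝ) - m) * krawCoeff p N (k + 1) (m + 1) := by
      apply mul_left_cancel₀ hNm
      linear_combination h2 - ((k : ℝ) - m) * h1
    rw [Nat.add_sub_cancel]
    push_cast at h3 ⊢
    linear_combination p * f (m + 1) * h3 - f (m + 1) * h1 - p * f (m + 1) * h4

/-- The relation after division by the weight at `x = y + 1`. -/
lemma krawSum_relation (p : ℝ) (hp : 0 < p) (N k y : ℕ) (hk : k < N) :
    p * ((N : ℝ) - k) * krawSum p N (k + 1) (y + 1) =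
      p ^ 2 * ((N : ℝ) - (y + 1)) * krawSum p N k (y + 2)
      - (1 - p) ^ 2 * ((y : ℝ) + 1) * krawSum p N k y
      + p * (1 - p) * ((N : ℝ) - 2 * (y + 1)) * krawSum p N k (y + 1) := by
  have h := krawAux_telescope p hp N k hk (fun m => ((y + 1).descFactorial m : ℝ)) N le_rfl
  have hN : krawCoeff p N k N = 0 := by simp [krawCoeff, Nat.choose_eq_zero_of_lt hk]
  simp only [← krawAux_operator, hN] at h
  symm
  rw [← sub_eq_zero]
  unfold krawSum
  simp only [Finset.mul_sum]
  rw [← Finset.sum_sub_distrib, ← Finset.sum_add_distrib, ← Finset.sum_sub_distrib]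
  refine (Finset.sum_congr rfl fun m _ => ?_).trans (h.trans (by ring))
  ring

/-- Shifted difference relation (I) for the Krawtchouk polynomials. -/
theorem kraw_shifted_difference_I (N : ℕ) (p : ℝ)
    (hp : 0 < p) (hp' : p < 1) (n x : ℕ) (hn1 : 1 ≤ n) (hn : n ≤ N)
    (hx1 : 1 ≤ x) (hx : x ≤ N) :
    (((N : ℝ) + 1 - n) / (1 - p)) * kraw p N n (x : ℤ) =
      ((x : ℝ) + 1) * kraw p N (n - 1) ((x : ℤ) + 1)
        - ((N : ℝ) + 1 - x) * kraw p N (n - 1) ((x : ℤ) - 1)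
        + ((N : ℝ) - 2 * x) * kraw p N (n - 1) (x : ℤ) := by
  obtain ⟨k, rfl⟩ : ∃ k, n = k + 1 := ⟨n - 1, by omega⟩
  obtain ⟨y, rfl⟩ : ∃ y, x = y + 1 := ⟨x - 1, by omega⟩
  have e1 : (((y + 1 : ℕ) : ℤ) + 1) = ((y + 2 : ℕ) : ℤ) := by push_cast; ring
  have e2 : (((y + 1 : ℕ) : ℤ) - 1) = (y : ℤ) := by push_cast; ring
  rw [Nat.add_sub_cancel, e1, e2, kraw_natCast p N _ _ hn, kraw_natCast p N k _ (by omega),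
    kraw_natCast p N k _ (by omega), kraw_natCast p N k _ (by omega)]
  have w1 := krawWeight_succ p hp' N y
  have w2 := krawWeight_succ p hp' N (y + 1)
  have hS := krawSum_relation p hp N k y (by omega)
  have hq : (1 - p) ≠ 0 := by linarith
  apply mul_left_cancel₀ (mul_ne_zero hp.ne' hq)
  have hd : (1 - p) * (((N : ℝ) + 1 - ((k + 1 : ℕ) : ℝ)) / (1 - p)) = (N : ℝ) - k := by
    rw [mul_div_cancel₀ _ hq]
    push_cast
    ring
  push_cast at hd w2 ⊢
  linear_combination p * krawWeight p N (y + 1) * krawSum p N (k + 1) (y + 1) * hd +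
    krawWeight p N (y + 1) * hS - p * krawSum p N k (y + 2) * w2
    - (1 - p) * krawSum p N k y * w1
end

section
/- Let N be a natural number and p a real with 0 < p < 1. Then for all natural numbers n, x with 1 ≤ n ≤ N−1 and x ≤ N, the Krawtchouk polynomials satisfy the shifted recurrence relation ((N−x)/(1−p)) · k_n(x;p,N) = (n−N) · k_{n+1}(x+1;p,N) + n · k_{n−1}(x+1;p,N) + (N−2n) · k_n(x+1;p,N), where N−x, n−N and N−2n denote real numbers (for n = 0 the relation also holds with the term n·k_{n−1} equal to zero). -/
open Polynomial in
/-- The generating polynomial `(1 - X) ^ n * (1 + p / (1 - p) X) ^ (N - n)` of `x ↦ k_n(x; p, N)`;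
the truncated subtraction is harmless since it is only used for `n ≤ N`. -/
noncomputable def krawGen (p : ℝ) (N n : ℕ) : ℝ[X] :=
  (1 - X) ^ n * (1 + C (p / (1 - p)) * X) ^ (N - n)

open Polynomial in
theorem coeff_one_add_C_mul_X_pow (r : ℝ) (k d : ℕ) :
    ((1 + C r * X : ℝ[X]) ^ k).coeff d = (k.choose d : ℝ) * r ^ d := by
  have h : (1 + C r * X : ℝ[X]) ^ k = ((1 + X) ^ k).comp (C r * X) := by simp
  rw [h, comp_C_mul_X_coeff, coeff_one_add_X_pow]

theorem choose_mul_choose_mul_factorial {N x m : ℕ} (hm : m ≤ x) (hx : x ≤ N) :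
    (N.choose x : ℝ) * (x.choose m : ℝ) * (m.factorial : ℝ) *
      ((N - m).factorial / (N.factorial : ℝ)) = ((N - m).choose (x - m) : ℝ) := by
  have h1 : (N.choose x : ℝ) * x.choose m = N.choose m * (N - m).choose (x - m) := by
    exact_mod_cast Nat.choose_mul (n := N) (k := x) (s := m) hm
  have h2 : (N.choose m : ℝ) * m.factorial * (N - m).factorial = N.factorial := by
    exact_mod_cast Nat.choose_mul_factorial_mul_factorial (hm.trans hx)
  have h3 : (N.factorial : ℝ) ≠ 0 := by positivity
  rw [h1]
  field_simp
  linear_combination ((N - m).choose (x - m) : ℝ) * h2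

open Polynomial in
theorem kraw_eq_coeff {p : ℝ} (hp : 0 < p) (hp' : p < 1) {N n : ℕ} (hn : n ≤ N) (x : ℕ) :
    kraw p N n (x : ℤ) = (krawGen p N n).coeff x := by
  have hq : (1 - p) ≠ 0 := by linarith
  have hp0 : p ≠ 0 := hp.ne'
  set r := p / (1 - p) with hr
  have hA : (1 - X : ℝ[X]) = C (-(r / p)) * X + (1 + C r * X) := by
    have : -(r / p) + r = -1 := by rw [hr]; field_simp; ring
    have h2 : C (-(r / p)) + C r = (-1 : ℝ[X]) := by rw [← C_add, this]; simp
    linear_combination (-X) * h2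
  have hG : krawGen p N n = ∑ m ∈ Finset.range (n + 1),
      C ((-(r / p)) ^ m * (n.choose m : ℝ)) * (X ^ m * (1 + C r * X) ^ (N - m)) := by
    rw [krawGen, ← hr]
    nth_rewrite 1 [hA]
    rw [add_pow, Finset.sum_mul]
    refine Finset.sum_congr rfl fun m hm => ?_
    have hm' : m ≤ n := Nat.lt_succ_iff.mp (Finset.mem_range.mp hm)
    have : N - m = (n - m) + (N - n) := by omega
    rw [this, pow_add, mul_pow, C_mul, C_pow, C_eq_natCast]
    ring
  have hc : ∀ m, (C ((-(r / p)) ^ m * (n.choose m : ℝ)) *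
      (X ^ m * (1 + C r * X) ^ (N - m))).coeff x =
      if m ≤ x then (-(r / p)) ^ m * (n.choose m : ℝ) *
        (((N - m).choose (x - m) : ℝ) * r ^ (x - m)) else 0 := by
    intro m
    rw [coeff_C_mul, coeff_X_pow_mul', coeff_one_add_C_mul_X_pow]
    split_ifs <;> simp
  rw [hG, finsetSum_coeff, kraw, if_neg (by omega), Int.toNat_natCast, zpow_natCast,
    Finset.mul_sum]
  rw [← Finset.sum_subset (s₁ := Finset.range (min n x + 1)) (s₂ := Finset.range (n + 1))]
  · refine Finset.sum_congr rfl fun m hm => ?_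
    rw [Finset.mem_range] at hm
    have hmx : m ≤ x := by omega
    rw [hc, if_pos hmx, ← hr]
    rcases le_or_gt x N with hx | hx
    · rw [← choose_mul_choose_mul_factorial hmx hx, zpow_neg, zpow_natCast]
      have : r ^ x = r ^ m * r ^ (x - m) := by rw [← pow_add]; congr 1; omega
      rw [this, show -(r / p) = (-1) * (r * p⁻¹) by rw [neg_one_mul, div_eq_mul_inv], mul_pow,
        mul_pow, inv_pow]
      ring
    · rw [Nat.choose_eq_zero_of_lt hx, Nat.choose_eq_zero_of_lt (by omega : N - m < x - m)]
      simp
  · intro m hm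
    simp only [Finset.mem_range] at hm ⊢
    omega
  · intro m hm hm'
    simp only [Finset.mem_range] at hm hm'
    rw [hc, if_neg (by omega)]

open Polynomial in
theorem krawGen_identity {p : ℝ} (hp' : p < 1) (i j : ℕ) :
    X * (C (1 / (1 - p)) * (C ((i + 1 + (j + 1) : ℕ) : ℝ) * krawGen p (i + 1 + (j + 1)) (i + 1)
        - X * derivative (krawGen p (i + 1 + (j + 1)) (i + 1)))) =
      C (-((j : ℝ) + 1)) * krawGen p (i + 1 + (j + 1)) (i + 2)
        + C ((i : ℝ) + 1) * krawGen p (i + 1 + (j + 1)) i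
        + C ((j : ℝ) - i) * krawGen p (i + 1 + (j + 1)) (i + 1) := by
  have hq : (1 - p) ≠ 0 := by linarith
  have e1 : i + 1 + (j + 1) - (i + 1) = j + 1 := by omega
  have e2 : i + 1 + (j + 1) - (i + 2) = j := by omega
  have e3 : i + 1 + (j + 1) - i = j + 2 := by omega
  have hs : C (1 / (1 - p)) = 1 + C (p / (1 - p)) := by
    rw [← C_1, ← C_add]; congr 1; field_simp; ring
  simp only [krawGen, e1, e2, e3, hs]
  generalize p / (1 - p) = r
  simp only [derivative_mul, derivative_pow, derivative_one, derivative_X, derivative_C, Nat.add_sub_cancel, map_natCast, map_add, map_sub, map_neg, map_one]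
  push_cast
  ring

/-- Shifted recurrence relation (II) for the Krawtchouk polynomials. -/
theorem kraw_shifted_recurrence_II (N : ℕ) (p : ℝ)
    (hp : 0 < p) (hp' : p < 1) (n x : ℕ) (hn1 : 1 ≤ n) (hn : n ≤ N - 1) (hx : x ≤ N) :
    (((N : ℝ) - x) / (1 - p)) * kraw p N n (x : ℤ) =
      ((n : ℝ) - N) * kraw p N (n + 1) ((x : ℤ) + 1)
        + (n : ℝ) * kraw p N (n - 1) ((x : ℤ) + 1)
        + ((N : ℝ) - 2 * n) * kraw p N n ((x : ℤ) + 1) := by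
  obtain ⟨i, rfl⟩ : ∃ i, n = i + 1 := ⟨n - 1, by omega⟩
  obtain ⟨j, rfl⟩ : ∃ j, N = i + 1 + (j + 1) := ⟨N - (i + 1) - 1, by omega⟩
  have hx1 : (x : ℤ) + 1 = ((x + 1 : ℕ) : ℤ) := by push_cast; rfl
  rw [hx1, Nat.add_sub_cancel, kraw_eq_coeff hp hp' (by omega), kraw_eq_coeff hp hp' (by omega),
    kraw_eq_coeff hp hp' (by omega), kraw_eq_coeff hp hp' (by omega)]
  have h := congrArg (fun q => Polynomial.coeff q (x + 1)) (krawGen_identity hp' i j)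
  have hd : ∀ q : Polynomial ℝ, (Polynomial.X * Polynomial.derivative q).coeff x
      = x * q.coeff x := by
    intro q
    cases x with
    | zero => simp
    | succ y =>
      rw [Polynomial.coeff_X_mul, Polynomial.coeff_derivative]
      push_cast
      ring
  simp only [Polynomial.coeff_X_mul, Polynomial.coeff_add, Polynomial.coeff_C_mul,
    Polynomial.coeff_sub, hd] at h
  push_cast at h ⊢
  linear_combination h
end
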